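/- arXiv:2510.24101 — 2 statements merged into one kernel-verified Lean document; each statement's English description precedes it below -/
import Mathlib

section
/- Let q be a prime with q ≥ (4B+1)², m ≥ 3n, and B = poly(n). Let x, x' be independent uniform elements of ℤ_q^n and M uniform in ℤ_q^{m×n}, all independent. Then the probability that x ≠ x' and there exists t ∈ ℤ_q^m with ‖t - M·x mod q‖_∞ ≤ B and ‖t - M·x' mod q‖_∞ ≤ B is at most q^{-n} + Pr[x = x'], which is negligible in n. -/
/-- The centered representative of `x : ZMod q`, lying in `(-q/2, q/2]`. -/
def ZModCtr (q : ℕ) (x : ZMod q) : ℤ :=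
  if 2 * x.val ≤ q then (x.val : ℤ) else (x.val : ℤ) - q

/-- The `ℓ∞`-norm of a vector over `ZMod q`, with entries represented in
    `(-q/2, q/2]`. -/
def infNormMod {q m : ℕ} (u : Fin m → ZMod q) : ℕ :=
  Finset.univ.sup fun i => (ZModCtr q (u i)).natAbs

/-!
For distinct keys `x ≠ x'` the difference `s = x - x'` is nonzero, so `M ↦ M *ᵥ s` is a surjective
homomorphism and `M *ᵥ s` is uniform over `ℤ_q^m` when `M` is uniform. A tag within distance `B` of
both `M *ᵥ x` and `M *ᵥ x'` forces `‖M *ᵥ s‖_∞ ≤ 2B`, and this ball has at most `(4B+1)^m` points.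
So each pair of distinct keys is confused with probability at most `((4B+1) / q)^m ≤ q^(-m/2)`.
The pair is fixed before `M` is drawn, so no union bound over `s` is needed.
-/

open Finset Matrix

theorem pow_mul_pow_le_pow_of_sq_le {c q m n : ℕ} (hq : 0 < q) (hc : c ^ 2 ≤ q)
    (hnm : 2 * n ≤ m) : c ^ m * q ^ n ≤ q ^ m := by
  refine (Nat.pow_le_pow_iff_left two_ne_zero).mp ?_
  calc (c ^ m * q ^ n) ^ 2 = (c ^ 2) ^ m * q ^ (2 * n) := by ring
    _ ≤ q ^ m * q ^ m :=
        Nat.mul_le_mul (Nat.pow_le_pow_left hc m) (Nat.pow_le_pow_right hq hnm)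
    _ = (q ^ m) ^ 2 := (sq _).symm

theorem mul_pow_le_of_mul_pow_le_pow_mul {a b c q m n : ℕ} (hq : 0 < q) (hc : c ^ 2 ≤ q)
    (hnm : 2 * n ≤ m) (hab : a * q ^ m ≤ c ^ m * b) : a * q ^ n ≤ b := by
  refine Nat.le_of_mul_le_mul_right ?_ (pow_pos hq m)
  calc a * q ^ n * q ^ m = a * q ^ m * q ^ n := mul_right_comm _ _ _
    _ ≤ c ^ m * b * q ^ n := Nat.mul_le_mul_right _ hab
    _ = b * (c ^ m * q ^ n) := by ring
    _ ≤ b * q ^ m := Nat.mul_le_mul_left _ (pow_mul_pow_le_pow_of_sq_le hq hc hnm)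

section Counting

variable {α β : Type*} [Fintype α] [Fintype β]

theorem card_filter_mem_mul_card_of_surjective [AddGroup α] [AddMonoid β] [DecidableEq β]
    (f : α →+ β) (hf : Function.Surjective f) (T : Finset β) :
    #{a | f a ∈ T} * Fintype.card β = #T * Fintype.card α := by
  have card_fiber (b : β) : #{a | f a = b} = #{a | f a = 0} :=
    AddMonoidHom.card_fiber_eq_of_mem_range f (hf b) (hf 0)
  have card_preimage (S : Finset β) : #{a | f a ∈ S} = #S * #{a | f a = 0} := by
    simp only [← sum_card_fiberwise_eq_card_filter, card_fiber, sum_const, smul_eq_mul]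
  have card_domain : Fintype.card α = Fintype.card β * #{a | f a = 0} := by
    simpa using card_preimage univ
  rw [card_preimage, card_domain, mul_assoc, mul_comm (Fintype.card β)]

theorem card_filter_prod_mul_le (p : α × β → Prop) [DecidablePred p] {k l : ℕ}
    (h : ∀ a, #{b | p (a, b)} * k ≤ l) : #{ω | p ω} * k ≤ Fintype.card α * l := by
  calc #{ω | p ω} * k = ∑ a, #{b | p (a, b)} * k := by
        simp only [card_filter, Fintype.sum_prod_type, sum_mul]
    _ ≤ ∑ _a : α, l := sum_le_sum fun a _ => h a
    _ = Fintype.card α * l := by simp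

end Counting

section MulVec

variable {m n K : Type*} [Fintype n] [DivisionRing K]

theorem mulVec_left_surjective {s : n → K} (hs : s ≠ 0) :
    Function.Surjective fun M : Matrix m n K => M *ᵥ s := by
  classical
  intro v
  obtain ⟨j, hj⟩ := Function.ne_iff.mp hs
  refine ⟨vecMulVec v (Pi.single j (s j)⁻¹), ?_⟩
  have hdot : Pi.single j (s j)⁻¹ ⬝ᵥ s = 1 := by
    rw [single_dotProduct, inv_mul_cancel₀ hj]
  simp [vecMulVec_mulVec, hdot]

theorem card_filter_mulVec_mem_mul_card [Fintype m] [DecidableEq m] [DecidableEq n] [Fintype K]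
    [DecidableEq K] {s : n → K} (hs : s ≠ 0) (T : Finset (m → K)) :
    #{M : Matrix m n K | M *ᵥ s ∈ T} * Fintype.card K ^ Fintype.card m =
      #T * Fintype.card (Matrix m n K) := by
  rw [← Fintype.card_fun]
  exact card_filter_mem_mul_card_of_surjective (mulVec.addMonoidHomLeft s)
    (mulVec_left_surjective hs) T

end MulVec

section CenteredNorm

variable {q m : ℕ}

theorem natAbs_ZModCtr (x : ZMod q) : (ZModCtr q x).natAbs = x.valMinAbs.natAbs := by
  cases q with
  | zero => simp [ZModCtr, ZMod.val]
  | succ q => simp only [ZModCtr, ZMod.valMinAbs_def_pos, Nat.le_div_iff_mul_le two_pos, mul_comm]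

theorem infNormMod_le_iff {u : Fin m → ZMod q} {C : ℕ} :
    infNormMod u ≤ C ↔ ∀ i, (u i).valMinAbs.natAbs ≤ C := by
  simp [infNormMod, natAbs_ZModCtr]

theorem natAbs_valMinAbs_le_infNormMod (u : Fin m → ZMod q) (i : Fin m) :
    (u i).valMinAbs.natAbs ≤ infNormMod u :=
  infNormMod_le_iff.mp le_rfl i

theorem infNormMod_sub_le (u v : Fin m → ZMod q) :
    infNormMod (u - v) ≤ infNormMod u + infNormMod v := by
  refine infNormMod_le_iff.mpr fun i => ?_
  calc (u i - v i).valMinAbs.natAbs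
      ≤ ((u i).valMinAbs + (-v i).valMinAbs).natAbs := by
        rw [sub_eq_add_neg]
        exact ZMod.natAbs_valMinAbs_add_le _ _
    _ ≤ (u i).valMinAbs.natAbs + (v i).valMinAbs.natAbs := by
        rw [← ZMod.natAbs_valMinAbs_neg (v i)]
        exact Int.natAbs_add_le _ _
    _ ≤ infNormMod u + infNormMod v :=
        add_le_add (natAbs_valMinAbs_le_infNormMod u i) (natAbs_valMinAbs_le_infNormMod v i)

variable [NeZero q]

theorem card_natAbs_valMinAbs_le (C : ℕ) :
    #{a : ZMod q | a.valMinAbs.natAbs ≤ C} ≤ 2 * C + 1 := by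
  have maps : ∀ a ∈ ({a : ZMod q | a.valMinAbs.natAbs ≤ C} : Finset (ZMod q)),
      a.valMinAbs ∈ Icc (-C : ℤ) C := by
    intro a ha
    have := (mem_filter.mp ha).2
    exact mem_Icc.mpr ⟨by omega, by omega⟩
  calc #{a : ZMod q | a.valMinAbs.natAbs ≤ C} ≤ #(Icc (-C : ℤ) C) :=
        card_le_card_of_injOn ZMod.valMinAbs maps ZMod.injective_valMinAbs.injOn
    _ = 2 * C + 1 := by rw [Int.card_Icc]; omega

theorem card_infNormMod_le (m C : ℕ) :
    #{u : Fin m → ZMod q | infNormMod u ≤ C} ≤ (2 * C + 1) ^ m := by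
  have ball_eq_pi : ({u : Fin m → ZMod q | infNormMod u ≤ C} : Finset (Fin m → ZMod q)) =
      Fintype.piFinset fun _ => {a | a.valMinAbs.natAbs ≤ C} := by
    ext u
    simp [infNormMod_le_iff]
  rw [ball_eq_pi, Fintype.card_piFinset_const]
  exact Nat.pow_le_pow_left (card_natAbs_valMinAbs_le C) m

end CenteredNorm

/-- The tracing key `x` traces the tag `t` under the public matrix `M`: the tag is within
`ℓ∞`-distance `B` of `M *ᵥ x`, distances being measured with centered representatives. -/
abbrev Traces {q m : ℕ} {ι : Type*} [Fintype ι] (B : ℕ) (M : Matrix (Fin m) ι (ZMod q))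
    (x : ι → ZMod q) (t : Fin m → ZMod q) : Prop :=
  infNormMod (t - M *ᵥ x) ≤ B

section Tracing

variable {q : ℕ} {ι : Type*} [Fintype ι]

theorem Traces.infNormMod_mulVec_sub_le {m B : ℕ} {M : Matrix (Fin m) ι (ZMod q)}
    {x x' : ι → ZMod q} {t : Fin m → ZMod q} (h : Traces B M x t) (h' : Traces B M x' t) :
    infNormMod (M *ᵥ (x - x')) ≤ 2 * B := by
  calc infNormMod (M *ᵥ (x - x')) = infNormMod ((t - M *ᵥ x') - (t - M *ᵥ x)) := by
        rw [mulVec_sub, sub_sub_sub_cancel_left]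
    _ ≤ infNormMod (t - M *ᵥ x') + infNormMod (t - M *ᵥ x) := infNormMod_sub_le _ _
    _ ≤ B + B := add_le_add h' h
    _ = 2 * B := (two_mul B).symm

variable [DecidableEq ι] [Fact q.Prime]

theorem card_infNormMod_mulVec_le_mul_pow (m C : ℕ) {s : ι → ZMod q} (hs : s ≠ 0) :
    #{M : Matrix (Fin m) ι (ZMod q) | infNormMod (M *ᵥ s) ≤ C} * q ^ m ≤
      (2 * C + 1) ^ m * Fintype.card (Matrix (Fin m) ι (ZMod q)) := by
  have uniform := card_filter_mulVec_mem_mul_card hs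
    ({u : Fin m → ZMod q | infNormMod u ≤ C} : Finset (Fin m → ZMod q))
  simp only [mem_filter_univ, ZMod.card, Fintype.card_fin] at uniform
  rw [uniform]
  exact Nat.mul_le_mul_right _ (card_infNormMod_le m C)

open Classical in
theorem card_exists_traces_mul_pow_le (m B : ℕ) {x x' : ι → ZMod q} (hx : x ≠ x') :
    #{M : Matrix (Fin m) ι (ZMod q) | ∃ t, Traces B M x t ∧ Traces B M x' t} * q ^ m ≤
      (4 * B + 1) ^ m * Fintype.card (Matrix (Fin m) ι (ZMod q)) := by
  have traced_subset : ({M | ∃ t, Traces B M x t ∧ Traces B M x' t} :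
      Finset (Matrix (Fin m) ι (ZMod q))) ⊆
        ({M | infNormMod (M *ᵥ (x - x')) ≤ 2 * B} : Finset _) :=
    monotone_filter_right _ fun _ _ ⟨_, h, h'⟩ => h.infNormMod_mulVec_sub_le h'
  calc _ ≤ #{M : Matrix (Fin m) ι (ZMod q) | infNormMod (M *ᵥ (x - x')) ≤ 2 * B} * q ^ m :=
        Nat.mul_le_mul_right _ (card_le_card traced_subset)
    _ ≤ (2 * (2 * B) + 1) ^ m * Fintype.card (Matrix (Fin m) ι (ZMod q)) :=
        card_infNormMod_mulVec_le_mul_pow m (2 * B) (sub_ne_zero.mpr hx)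
    _ = (4 * B + 1) ^ m * Fintype.card (Matrix (Fin m) ι (ZMod q)) := by
        rw [← mul_assoc, show 2 * 2 = 4 from rfl]

end Tracing

open Classical in
theorem trace_correctness_bound_general (q m B : ℕ) (ι : Type*) [Fintype ι] [DecidableEq ι]
    [Fact q.Prime] :
    #{ω : (ι → ZMod q) × (ι → ZMod q) × Matrix (Fin m) ι (ZMod q) |
        ω.1 ≠ ω.2.1 ∧ ∃ t, Traces B ω.2.2 ω.1 t ∧ Traces B ω.2.2 ω.2.1 t} * q ^ m ≤
      (4 * B + 1) ^ m *
        Fintype.card ((ι → ZMod q) × (ι → ZMod q) × Matrix (Fin m) ι (ZMod q)) := by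
  have pair_bound (x x' : ι → ZMod q) :
      #{M : Matrix (Fin m) ι (ZMod q) |
          x ≠ x' ∧ ∃ t, Traces B M x t ∧ Traces B M x' t} * q ^ m ≤
        (4 * B + 1) ^ m * Fintype.card (Matrix (Fin m) ι (ZMod q)) := by
    by_cases hx : x = x'
    · simp [hx]
    · simpa [hx] using card_exists_traces_mul_pow_le m B hx
  rw [Fintype.card_prod, Fintype.card_prod, mul_left_comm, mul_left_comm ((4 * B + 1) ^ m)]
  exact card_filter_prod_mul_le _ fun x => card_filter_prod_mul_le _ fun x' => pair_bound x x'

open Classical in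
/-- Trace-correctness: for independent uniform `x, x'` and uniform `M`, the
    probability that `x ≠ x'` and some tag `t` is traced by both (i.e. within
    distance `B` of both `M·x` and `M·x'`) is at most `q^{-n} + Pr[x = x']`.
    (Probabilities are expressed by counting: multiply through by
    `q^n · |Ω|⁻¹`.) -/
theorem trace_correctness_bound (q n m B : ℕ) [NeZero q] (hq : q.Prime)
    (hqB : (4 * B + 1) ^ 2 ≤ q) (hm : 3 * n ≤ m) :
    (Finset.univ.filter fun ω : (Fin n → ZMod q) × (Fin n → ZMod q) ×
          Matrix (Fin m) (Fin n) (ZMod q) =>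
        ω.1 ≠ ω.2.1 ∧ ∃ t : Fin m → ZMod q,
          infNormMod (fun i => t i - ω.2.2.mulVec ω.1 i) ≤ B ∧
          infNormMod (fun i => t i - ω.2.2.mulVec ω.2.1 i) ≤ B).card * q ^ n ≤
      Fintype.card ((Fin n → ZMod q) × (Fin n → ZMod q) ×
          Matrix (Fin m) (Fin n) (ZMod q)) +
        (Finset.univ.filter fun ω : (Fin n → ZMod q) × (Fin n → ZMod q) ×
            Matrix (Fin m) (Fin n) (ZMod q) => ω.1 = ω.2.1).card * q ^ n := by
  have : Fact q.Prime := ⟨hq⟩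
  have hnm : 2 * n ≤ m := by omega
  exact le_add_right (mul_pow_le_of_mul_pow_le_pow_mul hq.pos hqB hnm
    (trace_correctness_bound_general q m B (Fin n)))
end

section
/- Let q be prime, S ∈ ℤ^{m×m} a matrix whose columns are ℝ-linearly independent, and e, e' ∈ ℤ^m with ‖e‖_∞, ‖e'‖_∞ ≤ B where ‖S‖₂ · √m · B < q/2. If Sᵀ·e ≡ Sᵀ·e' (mod q), then e = e'. -/
open scoped BigOperators

/-!
Let `d` be the difference of the two solutions. By Cauchy–Schwarz, every entry of `Sᵀd` is at most
`‖S‖₂ · √m · 2B < q` in absolute value. A multiple of `q` this small is zero, so `Sᵀd = 0`. Since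
`S` is square, its rows are linearly independent as well as its columns, over `ℤ` as over `ℝ`, which
leaves only `d = 0`.
-/

open Matrix

section

variable {ι κ : Type*} [Fintype ι]

lemma abs_dotProduct_le_sqrt_mul_sqrt (v w : ι → ℝ) :
    |v ⬝ᵥ w| ≤ √(∑ i, v i ^ 2) * √(∑ i, w i ^ 2) := by
  rw [← Real.sqrt_mul (by positivity)]
  exact Real.abs_le_sqrt (Finset.sum_mul_sq_le_sq_mul_sq Finset.univ v w)

lemma sqrt_sum_sq_le_sqrt_card_mul {w : ι → ℝ} {B : ℝ} (hw : ∀ i, |w i| ≤ B) :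
    √(∑ i, w i ^ 2) ≤ √(Fintype.card ι) * B := by
  cases isEmpty_or_nonempty ι with
  | inl _ => simp
  | inr hι =>
    have hB : 0 ≤ B := (abs_nonneg _).trans (hw hι.some)
    calc √(∑ i, w i ^ 2) ≤ √(∑ _ : ι, B ^ 2) :=
          Real.sqrt_le_sqrt (Finset.sum_le_sum fun i _ => sq_le_sq.2 ((hw i).trans (le_abs_self B)))
      _ = √(Fintype.card ι) * B := by simp [Real.sqrt_sq hB]

lemma abs_dotProduct_le_mul_sqrt_card_mul {v w : ι → ℝ} {C B : ℝ}
    (hv : √(∑ i, v i ^ 2) ≤ C) (hw : ∀ i, |w i| ≤ B) :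
    |v ⬝ᵥ w| ≤ C * √(Fintype.card ι) * B :=
  calc |v ⬝ᵥ w| ≤ √(∑ i, v i ^ 2) * √(∑ i, w i ^ 2) := abs_dotProduct_le_sqrt_mul_sqrt v w
    _ ≤ C * (√(Fintype.card ι) * B) :=
        mul_le_mul hv (sqrt_sum_sq_le_sqrt_card_mul hw) (Real.sqrt_nonneg _)
          ((Real.sqrt_nonneg _).trans hv)
    _ = C * √(Fintype.card ι) * B := (mul_assoc _ _ _).symm

lemma mulVec_eq_zero_of_forall_dvd {q : ℕ} {A : Matrix κ ι ℤ} {x : ι → ℤ} {C B : ℝ}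
    (hA : ∀ j, √(∑ i, (A j i : ℝ) ^ 2) ≤ C) (hx : ∀ i, |(x i : ℝ)| ≤ B)
    (hlt : C * √(Fintype.card ι) * B < q) (hdvd : ∀ j, (q : ℤ) ∣ (A *ᵥ x) j) :
    A *ᵥ x = 0 := by
  funext j
  have hcast : (((A *ᵥ x) j : ℤ) : ℝ) = (fun i => (A j i : ℝ)) ⬝ᵥ (fun i => (x i : ℝ)) :=
    (Int.castRingHom ℝ).map_dotProduct (A j) x
  have habs : |(((A *ᵥ x) j : ℤ) : ℝ)| < q :=
    hcast ▸ (abs_dotProduct_le_mul_sqrt_card_mul (hA j) hx).trans_lt hlt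
  exact Int.eq_zero_of_abs_lt_dvd (hdvd j) (mod_cast habs)

theorem small_solution_unique_general {q : ℕ} {S : Matrix ι κ ℤ} (hS : LinearIndependent ℤ S.row)
    {e e' : ι → ℤ} {C B : ℝ} (hC : ∀ j, √(∑ i, (S i j : ℝ) ^ 2) ≤ C)
    (he : ∀ i, |(e i : ℝ)| ≤ B) (he' : ∀ i, |(e' i : ℝ)| ≤ B)
    (hlt : C * √(Fintype.card ι) * B < q / 2)
    (hcong : ∀ j, (q : ℤ) ∣ (Sᵀ *ᵥ e) j - (Sᵀ *ᵥ e') j) :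
    e = e' := by
  have hdiff : ∀ i, |((e - e') i : ℝ)| ≤ 2 * B := fun i => by
    rw [Pi.sub_apply, Int.cast_sub, two_mul]
    exact (abs_sub _ _).trans (add_le_add (he i) (he' i))
  have hzero : Sᵀ *ᵥ (e - e') = 0 :=
    mulVec_eq_zero_of_forall_dvd hC hdiff (by linarith) (by rwa [mulVec_sub])
  have hvecMul : e ᵥ* S = e' ᵥ* S := by
    rwa [mulVec_sub, sub_eq_zero, mulVec_transpose, mulVec_transpose] at hzero
  exact vecMul_injective_iff.2 hS hvecMul

end

/-- If the columns of `S` are ℝ-linearly independent, `‖e‖_∞, ‖e'‖_∞ ≤ B` with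
    `‖S‖₂·√m·B < q/2` (`‖S‖₂` the maximum column norm), and
    `Sᵀe ≡ Sᵀe' (mod q)`, then `e = e'`. -/
theorem small_solution_unique (q m : ℕ) (hq : q.Prime) (hm : 0 < m)
    (S : Matrix (Fin m) (Fin m) ℤ)
    (hlin : LinearIndependent ℝ fun j : Fin m => fun i : Fin m => ((S i j : ℤ) : ℝ))
    (e e' : Fin m → ℤ) (B : ℤ)
    (he : ∀ i, |e i| ≤ B) (he' : ∀ i, |e' i| ≤ B)
    (hnorm : (Finset.univ.sup' ⟨⟨0, hm⟩, Finset.mem_univ _⟩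
          fun j => Real.sqrt (∑ i, ((S i j : ℤ) : ℝ) ^ 2)) *
        Real.sqrt m * (B : ℝ) < (q : ℝ) / 2)
    (hcong : ∀ i, (q : ℤ) ∣ (S.transpose.mulVec e i - S.transpose.mulVec e' i)) :
    e = e' := by
  have hrow : LinearIndependent ℤ S.row :=
    linearIndependent_col_iff_row.1 (linearIndependent_algebraMap_comp_iff.1 hlin)
  exact small_solution_unique_general (B := B) hrow
    (fun j => Finset.le_sup' (fun j => √(∑ i, (S i j : ℝ) ^ 2)) (Finset.mem_univ j))
    (fun i => mod_cast he i) (fun i => mod_cast he' i) (by rwa [Fintype.card_fin]) hcong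
end
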